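/- Let (A, t) be a C_k-algebra and F ⊆ A. Then F is a cyclic deductive system if and only if F is a c-filter of A. -/

import Mathlib

universe u

/-- Modal pseudocomplemented De Morgan algebra (mpM-algebra). -/
class MpM (A : Type u) extends DistribLattice A, BoundedOrder A where
  dm : A → A   -- De Morgan negation ∼
  ps : A → A   -- pseudocomplement *
  dm_dm : ∀ x : A, dm (dm x) = x
  dm_sup : ∀ x y : A, dm (x ⊔ y) = dm x ⊓ dm y
  pseudo : ∀ a x : A, a ⊓ x = ⊥ ↔ x ≤ ps a
  modal : ∀ x : A, x ⊔ dm x ≤ x ⊔ ps x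

open MpM

variable {A : Type u} [MpM A]

/-- ∇x = ∼(∼x ∧ x*) -/
def nabla (x : A) : A := dm (dm x ⊓ ps x)

/-- △x = ∼∇∼x -/
def tri (x : A) : A := dm (nabla (dm x))

/-- A C_k-algebra structure on an mpM-algebra `A`: an automorphism `t` with `t^k = id`. -/
structure CkStr (A : Type u) [MpM A] (k : ℕ) where
  t : A → A
  bij : Function.Bijective t
  map_inf : ∀ x y : A, t (x ⊓ y) = t x ⊓ t y
  map_sup : ∀ x y : A, t (x ⊔ y) = t x ⊔ t y
  map_dm : ∀ x : A, t (dm x) = dm (t x)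
  map_ps : ∀ x : A, t (ps x) = ps (t x)
  map_bot : t (⊥ : A) = ⊥
  map_top : t (⊤ : A) = ⊤
  periodic : ∀ x : A, t^[k] x = x

/-- Lattice filter: nonempty, upward closed, closed under binary meets. -/
def IsLatFilter (F : Set A) : Prop :=
  F.Nonempty ∧ (∀ x ∈ F, ∀ y : A, x ≤ y → y ∈ F) ∧ ∀ x ∈ F, ∀ y ∈ F, x ⊓ y ∈ F

/-- c-filter: a filter closed under △ and t. -/
def IsCFilter {k : ℕ} (T : CkStr A k) (F : Set A) : Prop :=
  IsLatFilter F ∧ ∀ x ∈ F, tri x ∈ F ∧ T.t x ∈ F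

/-- maximal c-filter: proper and not properly contained in a proper c-filter. -/
def IsMaxCFilter {k : ℕ} (T : CkStr A k) (N : Set A) : Prop :=
  IsCFilter T N ∧ N ≠ Set.univ ∧
    ∀ G : Set A, IsCFilter T G → G ≠ Set.univ → N ⊆ G → N = G

/-- prime filter -/
def IsPrimeFilter (P : Set A) : Prop :=
  IsLatFilter P ∧ P ≠ Set.univ ∧ ∀ x y : A, x ⊔ y ∈ P → x ∈ P ∨ y ∈ P

/-- ultrafilter: maximal proper (lattice) filter -/
def IsUltraFilter (U : Set A) : Prop :=
  IsLatFilter U ∧ U ≠ Set.univ ∧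
    ∀ G : Set A, IsLatFilter G → G ≠ Set.univ → U ⊆ G → U = G

/-- Birula–Rasiowa transformation φ(P) = A \ {∼x : x ∈ P}. -/
def brPhi (P : Set A) : Set A := Set.univ \ (dm '' P)

/-- a ⇁ b = (⋁_{i=1}^{k} ∇(∼ t^i(a))) ∨ b -/
def rimp {k : ℕ} (T : CkStr A k) (a b : A) : A :=
  ((Finset.Icc 1 k).sup fun i => nabla (dm (T.t^[i] a))) ⊔ b

/-- cyclic deductive system -/
def IsCDS {k : ℕ} (T : CkStr A k) (D : Set A) : Prop :=
  (⊤ : A) ∈ D ∧ ∀ x ∈ D, ∀ y : A, rimp T x y ∈ D → y ∈ D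

/-- maximal cyclic deductive system -/
def IsMaxCDS {k : ℕ} (T : CkStr A k) (M : Set A) : Prop :=
  IsCDS T M ∧ M ≠ Set.univ ∧
    ∀ G : Set A, IsCDS T G → G ≠ Set.univ → M ⊆ G → M = G

/-- the smallest cyclic deductive system containing `X` -/
def genCDS {k : ℕ} (T : CkStr A k) (X : Set A) : Set A :=
  ⋂₀ {D : Set A | IsCDS T D ∧ X ⊆ D}

/-- K(A) = {x : t(x) = x and ∇x = x} -/
def Kset {k : ℕ} (T : CkStr A k) : Set A := {x : A | T.t x = x ∧ nabla x = x}

/-- consistency operator ∘x = ⋀_{i=0}^{k} t^i((∼x ∨ x) ∧ (x ∧ ∼x)*) -/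
def cCirc {k : ℕ} (T : CkStr A k) (x : A) : A :=
  (Finset.Icc 0 k).inf fun i => T.t^[i] ((dm x ⊔ x) ⊓ ps (x ⊓ dm x))

/-- x → y = ∼((∼(x∨y))* ∧ (x∨y)) ∨ ((∼(x∧y))* ∧ (x∧y)) -/
def mpTo (x y : A) : A :=
  dm (ps (dm (x ⊔ y)) ⊓ (x ⊔ y)) ⊔ (ps (dm (x ⊓ y)) ⊓ (x ⊓ y))

/-- x ⇒ y = (x → y) ∧ (∼y → ∼x) -/
def mpIff (x y : A) : A := mpTo x y ⊓ mpTo (dm y) (dm x)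

/-!
In a bounded distributive lattice, suppose every `δ x ≤ x` has a complement `c x`. Then
`c x ⊔ y = ⊤` iff `δ x ≤ y`, so a set containing `⊤` and closed under detachment for `c x ⊔ y` is
a filter closed under `δ`; conversely `δ x ⊓ (c x ⊔ y) ≤ y` gives detachment in such a filter.

By the modal axiom, `∇∼x = ∼△x` is a complement of `△x = x ⊓ (∼x)* ≤ x`. Hence
`δ x = ⋀ i ∈ [1, k], △(tⁱ x)` is complemented by `⋁ i ∈ [1, k], ∇∼(tⁱ x)`, and it lies below `x`
because `tᵏ x = x`. A filter is closed under this `δ` iff it is closed under `△` and `t`.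
-/

section Filter

open Order

theorem isPFilter_iff {P : Type*} [SemilatticeInf P] {F : Set P} :
    IsPFilter F ↔ F.Nonempty ∧ IsUpperSet F ∧ InfClosed F := by
  constructor
  · intro h
    exact ⟨h.toPFilter.nonempty, fun _ _ hxy hx => h.toPFilter.mem_of_le hxy hx,
      fun _ hx _ hy => PFilter.inf_mem (F := h.toPFilter) hx hy⟩
  · rintro ⟨hne, hup, hinf⟩
    exact .of_def hne (fun x hx y hy => ⟨x ⊓ y, hinf hx hy, inf_le_left, inf_le_right⟩)
      fun hxy hx => hup hxy hx

theorem forall_inf_iterate_mem_iff {P : Type*} [SemilatticeInf P] [OrderTop P] {δ t : P → P}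
    {k : ℕ} (hk : 0 < k) (hδ : ∀ x, δ x ≤ x) (ht : ∀ x, t^[k] x = x) {F : Set P}
    (hF : IsPFilter F) :
    (∀ x ∈ F, ((Finset.Icc 1 k).inf fun i => δ (t^[i] x)) ∈ F) ↔ ∀ x ∈ F, δ x ∈ F ∧ t x ∈ F := by
  obtain ⟨⟨a, ha⟩, hup, hinf⟩ := isPFilter_iff.1 hF
  constructor
  · intro h x hx
    have le_of_mem {i : ℕ} (hi : i ∈ Finset.Icc 1 k) :
        ((Finset.Icc 1 k).inf fun i => δ (t^[i] x)) ≤ δ (t^[i] x) := Finset.inf_le hi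
    refine ⟨hup ?_ (h x hx), hup ?_ (h x hx)⟩
    · simpa only [ht] using le_of_mem (Finset.right_mem_Icc.2 hk)
    · exact (le_of_mem (Finset.left_mem_Icc.2 hk)).trans (hδ (t x))
  · intro h x hx
    have iterate_mem (i : ℕ) : t^[i] x ∈ F :=
      Set.MapsTo.iterate (fun y hy => (h y hy).2) i hx
    exact Finset.inf_mem F (hup le_top ha) (fun _ hy _ hz => hinf hy hz) _ _
      fun i _ => (h _ (iterate_mem i)).1

end Filter

section DeductiveSystem

variable {L : Type*} [DistribLattice L] [BoundedOrder L]

theorem isCompl_finset_inf_sup {ι : Type*} {s : Finset ι} {f g : ι → L}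
    (h : ∀ i ∈ s, IsCompl (f i) (g i)) : IsCompl (s.inf f) (s.sup g) where
  disjoint := Finset.disjoint_sup_right.2 fun i hi => (h i hi).disjoint.mono_left (Finset.inf_le hi)
  codisjoint := Finset.codisjoint_inf_left.2 fun i hi =>
    (h i hi).codisjoint.mono_right (Finset.le_sup (f := g) hi)

/-- Deductive systems of an arbitrary implication: sets containing `⊤` and closed under detachment.
The cyclic deductive systems of a `C_k`-algebra are those of `rimp T`. -/
def IsDeductiveSystem {P : Type*} [Top P] (imp : P → P → P) (D : Set P) : Prop :=
  ⊤ ∈ D ∧ ∀ x ∈ D, ∀ y, imp x y ∈ D → y ∈ D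

theorem IsDeductiveSystem.mem_of_le {δ c : L → L} (hc : ∀ x, IsCompl (δ x) (c x)) {D : Set L}
    (hD : IsDeductiveSystem (c · ⊔ ·) D) {x y : L} (hx : x ∈ D) (hxy : δ x ≤ y) : y ∈ D := by
  have imp_eq_top : c x ⊔ y = ⊤ := ((hc x).symm.codisjoint.mono_right hxy).eq_top
  exact hD.2 x hx y (show c x ⊔ y ∈ D from imp_eq_top ▸ hD.1)

theorem isDeductiveSystem_iff {δ c : L → L} (hδ : ∀ x, δ x ≤ x) (hc : ∀ x, IsCompl (δ x) (c x))
    {F : Set L} :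
    IsDeductiveSystem (c · ⊔ ·) F ↔ Order.IsPFilter F ∧ ∀ x ∈ F, δ x ∈ F := by
  rw [isPFilter_iff]
  constructor
  · intro hF
    refine ⟨⟨⟨⊤, hF.1⟩, fun x y hxy hx => hF.mem_of_le hc hx ((hδ x).trans hxy), ?_⟩,
      fun x hx => hF.mem_of_le hc hx le_rfl⟩
    intro x hx y hy
    have le_imp : δ x ≤ c y ⊔ x ⊓ y := by
      rw [sup_comm, (hc y).le_sup_right_iff_inf_left_le]
      exact inf_le_inf (hδ x) (hδ y)
    exact hF.2 y hy _ (hF.mem_of_le hc hx le_imp)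
  · rintro ⟨⟨⟨a, ha⟩, hup, hinf⟩, hδF⟩
    refine ⟨hup le_top ha, fun x hx y hxy => hup ?_ (hinf (hδF x hx) hxy)⟩
    calc δ x ⊓ (c x ⊔ y) = δ x ⊓ y := by rw [inf_sup_left, (hc x).inf_eq_bot, bot_sup_eq]
      _ ≤ y := inf_le_right

theorem stmt8_general {δ c t : L → L} {k : ℕ} (hk : 0 < k) (hδ : ∀ x, δ x ≤ x)
    (hc : ∀ x, IsCompl (δ x) (c x)) (ht : ∀ x, t^[k] x = x) (F : Set L) :
    IsDeductiveSystem (fun x y => ((Finset.Icc 1 k).sup fun i => c (t^[i] x)) ⊔ y) F ↔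
      Order.IsPFilter F ∧ ∀ x ∈ F, δ x ∈ F ∧ t x ∈ F := by
  have inf_le (x : L) : ((Finset.Icc 1 k).inf fun i => δ (t^[i] x)) ≤ x :=
    calc ((Finset.Icc 1 k).inf fun i => δ (t^[i] x))
      _ ≤ δ (t^[k] x) := Finset.inf_le (Finset.right_mem_Icc.2 hk)
      _ ≤ x := (hδ _).trans_eq (ht x)
  rw [isDeductiveSystem_iff inf_le fun x => isCompl_finset_inf_sup fun i _ => hc (t^[i] x)]
  exact and_congr_right (forall_inf_iterate_mem_iff hk hδ ht)

end DeductiveSystem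

namespace MpM

theorem dm_inf (x y : A) : dm (x ⊓ y) = dm x ⊔ dm y := by
  rw [← dm_dm (dm x ⊔ dm y), dm_sup, dm_dm, dm_dm]

theorem dm_antitone : Antitone (dm : A → A) := fun x y hxy => by
  rw [← sup_eq_right.2 hxy, dm_sup]
  exact inf_le_left

theorem dm_bot : dm (⊥ : A) = ⊤ :=
  top_unique (by simpa only [dm_dm] using dm_antitone (bot_le : (⊥ : A) ≤ dm ⊤))

theorem isCompl_dm_of_disjoint {x : A} (h : Disjoint x (dm x)) : IsCompl x (dm x) where
  disjoint := h
  codisjoint := codisjoint_iff.2 <|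
    calc x ⊔ dm x = dm (x ⊓ dm x) := by rw [dm_inf, dm_dm, sup_comm]
      _ = ⊤ := by rw [h.eq_bot, dm_bot]

theorem disjoint_ps (x : A) : Disjoint x (ps x) :=
  disjoint_iff.2 ((pseudo x (ps x)).2 le_rfl)

theorem dm_inf_dm_ps_le (x : A) : dm x ⊓ dm (ps x) ≤ x :=
  calc dm x ⊓ dm (ps x) = dm (x ⊔ ps x) := (dm_sup _ _).symm
    _ ≤ dm (x ⊔ dm x) := dm_antitone (modal x)
    _ = dm x ⊓ x := by rw [dm_sup, dm_dm]
    _ ≤ x := inf_le_right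

end MpM

theorem tri_eq_inf_ps_dm (x : A) : tri x = x ⊓ ps (dm x) := by
  rw [tri, nabla, dm_dm, dm_dm]

theorem tri_le (x : A) : tri x ≤ x :=
  (tri_eq_inf_ps_dm x).trans_le inf_le_left

theorem disjoint_tri_dm_tri (x : A) : Disjoint (tri x) (dm (tri x)) := by
  have tri_le_ps : tri x ≤ ps (dm x) := (tri_eq_inf_ps_dm x).trans_le inf_le_right
  have inf_dm_ps_le : tri x ⊓ dm (ps (dm x)) ≤ dm x :=
    calc tri x ⊓ dm (ps (dm x)) ≤ dm (dm x) ⊓ dm (ps (dm x)) := by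
          rw [dm_dm]
          exact inf_le_inf_right _ (tri_le x)
      _ ≤ dm x := dm_inf_dm_ps_le (dm x)
  have inf_dm_tri_le : tri x ⊓ dm (tri x) ≤ dm x := by
    rw [tri_eq_inf_ps_dm x, dm_inf, ← tri_eq_inf_ps_dm, inf_sup_left]
    exact sup_le inf_le_right inf_dm_ps_le
  exact disjoint_iff_inf_le.2
    ((disjoint_ps (dm x)) inf_dm_tri_le (inf_le_left.trans tri_le_ps))

theorem isCompl_tri_nabla_dm (x : A) : IsCompl (tri x) (nabla (dm x)) := by
  rw [← dm_dm (nabla (dm x))]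
  exact isCompl_dm_of_disjoint (disjoint_tri_dm_tri x)

theorem isLatFilter_iff_isPFilter {F : Set A} : IsLatFilter F ↔ Order.IsPFilter F := by
  rw [isPFilter_iff]
  exact and_congr_right' (and_congr
    ⟨fun h x y hxy hx => h x hx y hxy, fun h _ hx _ hxy => h hxy hx⟩
    ⟨fun h x hx y hy => h x hx y hy, fun h _ hx _ hy => h hx hy⟩)

theorem stmt8 {k : ℕ} (hk : 0 < k) (T : CkStr A k) (F : Set A) :
    IsCDS T F ↔ IsCFilter T F := by
  rw [IsCFilter, isLatFilter_iff_isPFilter]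
  exact stmt8_general hk tri_le isCompl_tri_nabla_dm T.periodic F
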